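/- arXiv:1305.2669 — 2 statements merged into one kernel-verified Lean document; each statement's English description precedes it below -/
import Mathlib

section
/- Let Ω ⊂ ℝⁿ be a bounded open convex domain, and let u be a function of class C¹ on the closure of Ω, strictly convex and satisfying det D²u = 1 in Ω with u = 0 on ∂Ω. Let x ∈ ∂Ω, and suppose there are open balls B_r(y) ⊆ Ω and Ω ⊆ B_R(z) with x ∈ ∂B_r(y) and x ∈ ∂B_R(z) (balls inscribed in and circumscribed about Ω touching ∂Ω at x). Then r ≤ |Du(x)| ≤ R. -/
/-!
The solution `u` is compared with multiples `c · u_B`, `u_B(q) = (|q - a|² - ρ²) / 2`, of the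
solution on a ball. At an interior minimum of `u - c u_B` with `c > 1` one has `D²u ≥ c I`, so
`det D²u > 1`; at an interior maximum with `c < 1` one has `0 < D²u ≤ c I`, so `det D²u < 1`. Both
are impossible (`not_isLocalMin`, `not_isLocalMax`), the factor `c ≠ 1` making the comparison
strict. Hence `u ≤ 0`, `u ≤ c u_{B_r(y)}` on the inner ball for `0 ≤ c < 1`, and
`c u_{B_R(z)} ≤ u` on `Ω` for `c > 1`, with equality at `x` in the last two.

Differentiating the first comparison at `x` along `y - x` and letting `c → 1` gives `r ≤ |Du(x)|`.
For the upper bound the second comparison is differentiated along `-Du(x)`, which gives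
`|Du(x)|² ≤ c ⟨x - z, Du(x)⟩ ≤ c R |Du(x)|`. This needs `-Du(x)` to point into `Ω`; since `r = 0` is
allowed, `∂Ω` need not be smooth at `x`, and the fact is derived from `u = 0` on `∂Ω`
(`neg_gradient_points_inward`).
-/

open scoped BigOperators

/-- First partial derivative in direction `i`. -/
noncomputable def pd {n : ℕ} (i : Fin n) (f : EuclideanSpace ℝ (Fin n) → ℝ) :
    EuclideanSpace ℝ (Fin n) → ℝ :=
  fun x => fderiv ℝ f x (EuclideanSpace.single i 1)

/-- The Hessian matrix `(u_{ij})` of `u` at `x`. -/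
noncomputable def hess {n : ℕ} (u : EuclideanSpace ℝ (Fin n) → ℝ)
    (x : EuclideanSpace ℝ (Fin n)) : Matrix (Fin n) (Fin n) ℝ :=
  Matrix.of fun i j => pd i (pd j u) x

open Set Filter Topology

/-! ### Second-order conditions at interior extrema -/

/-- A necessary second-order condition: the second derivative at a local minimum is nonnegative. -/
lemma second_deriv_nonneg_of_isLocalMin {f f' : ℝ → ℝ} {m : ℝ}
    (hf : ∀ᶠ t in 𝓝 (0 : ℝ), HasDerivAt f (f' t) t) (hf' : HasDerivAt f' m 0)
    (hmin : IsLocalMin f 0) : 0 ≤ m := by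
  by_contra! hm
  have hd : deriv f =ᶠ[𝓝 0] f' := hf.mono fun t ht => ht.deriv
  have hdd : deriv (deriv f) 0 = m := by rw [hd.deriv_eq, hf'.deriv]
  -- If `m < 0` then `0` is also a local maximum, so `f` is locally constant and `m = 0`.
  have hmax : IsLocalMax f 0 :=
    isLocalMax_of_deriv_deriv_neg (by rwa [hdd]) hmin.deriv_eq_zero
      hf.self_of_nhds.continuousAt
  have hconst : f =ᶠ[𝓝 0] fun _ => f 0 := by
    filter_upwards [hmin, hmax] with t h1 h2 using le_antisymm h2 h1
  have h0 : deriv (deriv f) 0 = 0 := by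
    rw [hconst.deriv.deriv_eq]; simp
  linarith

lemma fderiv_eq_sum_pd {n : ℕ} (f : EuclideanSpace ℝ (Fin n) → ℝ)
    (p v : EuclideanSpace ℝ (Fin n)) : fderiv ℝ f p v = ∑ i, v i * pd i f p := by
  have hv : v = ∑ i, v i • EuclideanSpace.single i (1 : ℝ) := by
    ext j
    simp [Finset.sum_apply, Pi.single_apply]
  conv_lhs => rw [hv]
  simp [map_sum, pd]

/-- At a local minimum of `σ (u - c/2 |· - a|²)` the Hessian of that function is nonnegative in
every direction. The sign `σ = ±1` covers minima and maxima at once. -/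
lemma hess_quadratic_of_isLocalMin {n : ℕ} {Ω : Set (EuclideanSpace ℝ (Fin n))} (hΩ : IsOpen Ω)
    {u : EuclideanSpace ℝ (Fin n) → ℝ} (hu : ContDiffOn ℝ 2 u Ω)
    {p : EuclideanSpace ℝ (Fin n)} (hp : p ∈ Ω) (a : EuclideanSpace ℝ (Fin n)) (σ c : ℝ)
    (hmin : IsLocalMin (fun q => σ * (u q - c / 2 * ‖q - a‖ ^ 2)) p)
    (v : EuclideanSpace ℝ (Fin n)) :
    0 ≤ σ * (dotProduct (v : Fin n → ℝ) ((hess u p).mulVec v) - c * ‖v‖ ^ 2) := by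
  have hline : ∀ t : ℝ, HasDerivAt (fun t : ℝ => p + t • v) v t := fun t => by
    simpa using ((hasDerivAt_id t).smul_const v).const_add p
  have hcont : Continuous (fun t : ℝ => p + t • v) := by fun_prop
  have hmem : ∀ᶠ t in 𝓝 (0 : ℝ), p + t • v ∈ Ω :=
    hcont.continuousAt.eventually_mem (by simpa using hΩ.mem_nhds hp)
  have hdiff : ∀ q ∈ Ω, DifferentiableAt ℝ u q := fun q hq =>
    (hu.contDiffAt (hΩ.mem_nhds hq)).differentiableAt (by norm_num)
  have hfd : DifferentiableAt ℝ (fderiv ℝ u) p :=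
    ((hu.contDiffAt (hΩ.mem_nhds hp)).fderiv_right (m := 1) (by norm_num)).differentiableAt
      (by norm_num)
  have hpd : ∀ j, DifferentiableAt ℝ (pd j u) p := fun j => by
    unfold pd; fun_prop
  have hsub : ∀ t : ℝ, HasDerivAt (fun t : ℝ => p + t • v - a) v t := fun t =>
    (hline t).sub_const a
  have h1 : ∀ᶠ t in 𝓝 (0 : ℝ),
      HasDerivAt (fun t : ℝ => σ * (u (p + t • v) - c / 2 * ‖p + t • v - a‖ ^ 2))
        (σ * ((∑ j, v j * pd j u (p + t • v)) - c * inner ℝ (p + t • v - a) v)) t := by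
    filter_upwards [hmem] with t ht
    have e1 := (hdiff _ ht).hasFDerivAt.comp_hasDerivAt t (hline t)
    rw [fderiv_eq_sum_pd] at e1
    have e2 := ((hsub t).norm_sq).const_mul (c / 2)
    refine ((e1.sub e2).const_mul σ).congr_deriv ?_
    ring
  have hsecond : HasDerivAt (fun t : ℝ => ∑ j, v j * pd j u (p + t • v))
      (dotProduct (v : Fin n → ℝ) ((hess u p).mulVec v)) 0 := by
    have e : ∀ j ∈ (Finset.univ : Finset (Fin n)),
        HasDerivAt (fun t : ℝ => v j * pd j u (p + t • v))
          (v j * ∑ i, v i * pd i (pd j u) p) 0 := fun j _ => by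
      have hj : HasFDerivAt (pd j u) (fderiv ℝ (pd j u) p) (p + (0 : ℝ) • v) := by
        simpa using (hpd j).hasFDerivAt
      have := hj.comp_hasDerivAt 0 (hline 0)
      rw [fderiv_eq_sum_pd] at this
      exact this.const_mul (v j)
    refine (HasDerivAt.fun_sum e).congr_deriv ?_
    simp only [dotProduct, Matrix.mulVec, hess, Matrix.of_apply, Finset.mul_sum]
    rw [Finset.sum_comm]
    refine Finset.sum_congr rfl fun i _ => Finset.sum_congr rfl fun j _ => ?_
    ring
  have hinner : HasDerivAt (fun t : ℝ => c * inner ℝ (p + t • v - a) v) (c * ‖v‖ ^ 2) 0 := by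
    have := ((hsub 0).inner ℝ (hasDerivAt_const (0 : ℝ) v)).const_mul c
    simpa [real_inner_self_eq_norm_sq] using this
  refine second_deriv_nonneg_of_isLocalMin h1 ((hsecond.sub hinner).const_mul σ) ?_
  have h0 : Tendsto (fun t : ℝ => p + t • v) (𝓝 0) (𝓝 p) := by
    simpa using hcont.tendsto 0
  have := h0.eventually hmin
  simpa [IsLocalMin, IsMinFilter] using this

/-! ### Comparison with multiples of the ball solution -/

/-- For a solution of `det D²u = 1`, the function `u - c/2 |· - a|²` has no interior local minimum
when `c > 1`: there `D²u ≥ c I`, which forces `det D²u > 1`. -/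
lemma not_isLocalMin {n : ℕ} (hn : 0 < n) {Ω : Set (EuclideanSpace ℝ (Fin n))} (hΩ : IsOpen Ω)
    {u : EuclideanSpace ℝ (Fin n) → ℝ} (hu : ContDiffOn ℝ 2 u Ω)
    (hpos : ∀ x ∈ Ω, (hess u x).PosDef) (hMA : ∀ x ∈ Ω, (hess u x).det = 1)
    {p : EuclideanSpace ℝ (Fin n)} (hp : p ∈ Ω) (a : EuclideanSpace ℝ (Fin n)) {c : ℝ}
    (hc : 1 < c) : ¬ IsLocalMin (fun q => u q - c / 2 * ‖q - a‖ ^ 2) p := by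
  intro hmin
  have hH := (hpos p hp).isHermitian
  have hev : ∀ i, 1 < hH.eigenvalues i := fun i => by
    have h := hess_quadratic_of_isLocalMin hΩ hu hp a 1 c (by simpa using hmin)
      (hH.eigenvectorBasis i)
    have h2 := hH.eigenvalues_eq i
    simp at h h2
    linarith
  have : Nonempty (Fin n) := ⟨⟨0, hn⟩⟩
  have hprod := Finset.prod_lt_prod_of_nonempty (s := (Finset.univ : Finset (Fin n)))
    (f := fun _ => (1 : ℝ)) (g := hH.eigenvalues) (fun _ _ => one_pos) (fun i _ => hev i)
    Finset.univ_nonempty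
  have hdet := hH.det_eq_prod_eigenvalues
  rw [hMA p hp] at hdet
  simp at hprod hdet
  linarith

/-- For a solution of `det D²u = 1` with `D²u > 0`, the function `u - c/2 |· - a|²` has no interior
local maximum when `c < 1`: there `0 < D²u ≤ c I`, which forces `det D²u < 1`. -/
lemma not_isLocalMax {n : ℕ} (hn : 0 < n) {Ω : Set (EuclideanSpace ℝ (Fin n))} (hΩ : IsOpen Ω)
    {u : EuclideanSpace ℝ (Fin n) → ℝ} (hu : ContDiffOn ℝ 2 u Ω)
    (hpos : ∀ x ∈ Ω, (hess u x).PosDef) (hMA : ∀ x ∈ Ω, (hess u x).det = 1)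
    {p : EuclideanSpace ℝ (Fin n)} (hp : p ∈ Ω) (a : EuclideanSpace ℝ (Fin n)) {c : ℝ}
    (hc : c < 1) : ¬ IsLocalMax (fun q => u q - c / 2 * ‖q - a‖ ^ 2) p := by
  intro hmax
  have hH := (hpos p hp).isHermitian
  have hev : ∀ i, hH.eigenvalues i < 1 := fun i => by
    have h := hess_quadratic_of_isLocalMin hΩ hu hp a (-1) c
      (by simpa only [neg_one_mul] using hmax.neg) (hH.eigenvectorBasis i)
    have h2 := hH.eigenvalues_eq i
    simp at h h2
    linarith
  have : Nonempty (Fin n) := ⟨⟨0, hn⟩⟩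
  have hprod := Finset.prod_lt_prod_of_nonempty (s := (Finset.univ : Finset (Fin n)))
    (f := hH.eigenvalues) (g := fun _ => (1 : ℝ)) (fun i _ => (hpos p hp).eigenvalues_pos i)
    (fun i _ => hev i) Finset.univ_nonempty
  have hdet := hH.det_eq_prod_eigenvalues
  rw [hMA p hp] at hdet
  simp at hprod hdet
  linarith

/-- Minimum principle on a bounded set: a function without interior local minima is bounded below
by any lower bound of its boundary values. -/
lemma le_of_forall_not_isLocalMin {E : Type*} [NormedAddCommGroup E] [ProperSpace E] {S : Set E}
    (hS : IsOpen S) (hb : Bornology.IsBounded S) {f : E → ℝ} (hf : ContinuousOn f (closure S))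
    {m : ℝ} (hbd : ∀ q ∈ frontier S, m ≤ f q) (hno : ∀ p ∈ S, ¬ IsLocalMin f p) :
    ∀ q ∈ closure S, m ≤ f q := by
  intro q hq
  obtain ⟨p, hp, hmin⟩ := hb.isCompact_closure.exists_isMinOn ⟨q, hq⟩ hf
  have hpS : p ∉ S := fun h =>
    hno p h ((hmin.on_subset subset_closure).isLocalMin (hS.mem_nhds h))
  have : p ∈ frontier S := by rw [hS.frontier_eq]; exact ⟨hp, hpS⟩
  exact (hbd p this).trans (hmin hq)

/-! ### First-order behaviour at the boundary point -/

/-- If `f` is nonnegative just after `0` along a ray from a zero `x` of `f`, then the derivative in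
the direction of the ray is nonnegative. -/
lemma fderiv_nonneg_of_ray {E : Type*} [NormedAddCommGroup E] [NormedSpace ℝ E] {f : E → ℝ}
    {f' : E →L[ℝ] ℝ} {x e : E} (hf : HasFDerivAt f f' x) (hx : f x = 0)
    (h : ∀ᶠ t in 𝓝[>] (0 : ℝ), 0 ≤ f (x + t • e)) : 0 ≤ f' e := by
  have hline : HasDerivAt (fun t : ℝ => x + t • e) e 0 := by
    simpa using ((hasDerivAt_id (0 : ℝ)).smul_const e).const_add x
  have hf0 : HasFDerivAt f f' (x + (0 : ℝ) • e) := by simpa using hf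
  have hd := (hf0.comp_hasDerivAt 0 hline).hasDerivWithinAt (s := Ioi 0)
  rw [hasDerivWithinAt_iff_tendsto_slope' (by simp)] at hd
  refine ge_of_tendsto hd ?_
  filter_upwards [h, self_mem_nhdsWithin] with t ht ht0
  have : (0 : ℝ) < t := ht0
  simp only [slope_def_field, Function.comp, zero_smul, add_zero, hx, sub_zero]
  positivity

/-- Let `u` vanish on `∂Ω` and be nonpositive on `Ω`. At a boundary point where `Du = G ≠ 0`, the
direction `-G` points into `Ω`. The reason: on the segment joining `x + t (q - x)`, `q ∈ Ω`, to
`x - t G`, the function `u` is negative for small `t > 0`, so this segment cannot leave `Ω`. -/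
lemma neg_gradient_points_inward {n : ℕ} {Ω : Set (EuclideanSpace ℝ (Fin n))}
    (hΩo : IsOpen Ω) (hΩc : Convex ℝ Ω) {u : EuclideanSpace ℝ (Fin n) → ℝ}
    (hbd : ∀ x ∈ frontier Ω, u x = 0) (hneg : ∀ q ∈ Ω, u q ≤ 0)
    {x : EuclideanSpace ℝ (Fin n)} (hx : x ∈ frontier Ω) {G : EuclideanSpace ℝ (Fin n)}
    (hG : HasFDerivAt u (innerSL ℝ G) x) (hG0 : G ≠ 0) :
    ∀ᶠ t in 𝓝[>] (0 : ℝ), x + t • (-G) ∈ Ω := by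
  have hGpos : 0 < ‖G‖ := norm_pos_iff.mpr hG0
  have hxcl : x ∈ closure Ω := frontier_subset_closure hx
  obtain ⟨q, hq⟩ : Ω.Nonempty := closure_nonempty_iff.mp ⟨x, hxcl⟩
  have hray : ∀ q ∈ Ω, ∀ t : ℝ, 0 < t → t ≤ 1 → x + t • (q - x) ∈ Ω := fun q hq t ht ht1 => by
    have := hΩc.add_smul_sub_mem_interior' hxcl (by rwa [hΩo.interior_eq]) ⟨ht, ht1⟩
    rwa [hΩo.interior_eq] at this
  have hsmall : ∀ᶠ t in 𝓝[>] (0 : ℝ), 0 < t ∧ t ≤ 1 := by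
    filter_upwards [Ioc_mem_nhdsGT (zero_lt_one (α := ℝ))] with t ht using ht
  have hle : ∀ q ∈ Ω, inner ℝ G (q - x) ≤ 0 := fun q hq => by
    have h := fderiv_nonneg_of_ray (e := q - x) hG.neg (by simp [hbd x hx]) (by
      filter_upwards [hsmall] with t ht
      have := hneg _ (hray q hq t ht.1 ht.2)
      simpa using this)
    simpa using h
  -- Moving `q` slightly in the direction `G` makes the inequality strict.
  have hlt : inner ℝ G (q - x) < 0 := by
    have hc : Continuous (fun s : ℝ => q + s • G) := by fun_prop
    have hev : ∀ᶠ s in 𝓝[>] (0 : ℝ), q + s • G ∈ Ω :=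
      (hc.continuousAt.eventually_mem (by simpa using hΩo.mem_nhds hq)).filter_mono
        nhdsWithin_le_nhds
    obtain ⟨s, hs, hs0, -⟩ := (hev.and hsmall).exists
    have h := hle _ hs
    have e : q + s • G - x = (q - x) + s • G := by abel
    rw [e, inner_add_right, inner_smul_right, real_inner_self_eq_norm_sq] at h
    have : 0 < s * ‖G‖ ^ 2 := by positivity
    linarith
  set m : ℝ := min (-inner ℝ G (q - x)) (‖G‖ ^ 2) with hm
  have hm0 : 0 < m := lt_min (by linarith) (by positivity)
  set M : ℝ := ‖q - x‖ + ‖G‖ with hM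
  have hM0 : 0 < M := by positivity
  have hlin : ∀ᶠ q' in 𝓝 x, ‖u q' - u x - innerSL ℝ G (q' - x)‖ ≤ m / (2 * M) * ‖q' - x‖ :=
    hG.isLittleO.bound (by positivity)
  obtain ⟨δ, hδ, hball⟩ := Metric.eventually_nhds_iff.mp hlin
  have hsmallδ : ∀ᶠ t in 𝓝[>] (0 : ℝ), t < δ / M := by
    filter_upwards [Ioo_mem_nhdsGT (show 0 < δ / M by positivity)] with t ht using ht.2
  filter_upwards [hsmall, hsmallδ] with t ht htδ
  obtain ⟨ht0, ht1⟩ := ht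
  rw [lt_div_iff₀ hM0] at htδ
  have hneg' : ∀ q' ∈ segment ℝ (x + t • (q - x)) (x + t • (-G)), u q' < 0 := by
    rintro q' ⟨α, β, hα, hβ, hαβ, rfl⟩
    set d : EuclideanSpace ℝ (Fin n) := α • (q - x) + β • (-G) with hd
    have e : α • (x + t • (q - x)) + β • (x + t • (-G)) = x + t • d := by
      have : α • x + β • x = x := by rw [← add_smul, hαβ, one_smul]
      calc α • (x + t • (q - x)) + β • (x + t • (-G))
          = (α • x + β • x) + t • d := by rw [hd]; module
        _ = x + t • d := by rw [this]
    rw [e]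
    have hdM : ‖d‖ ≤ M := by
      calc ‖d‖ ≤ ‖α • (q - x)‖ + ‖β • (-G)‖ := norm_add_le _ _
        _ = α * ‖q - x‖ + β * ‖G‖ := by
          rw [norm_smul, norm_smul, norm_neg, Real.norm_of_nonneg hα, Real.norm_of_nonneg hβ]
        _ ≤ 1 * ‖q - x‖ + 1 * ‖G‖ := by gcongr <;> linarith
        _ = M := by rw [hM]; ring
    have hdm : inner ℝ G d ≤ -m := by
      have h1 : m ≤ -inner ℝ G (q - x) := min_le_left _ _
      have h2 : m ≤ ‖G‖ ^ 2 := min_le_right _ _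
      rw [hd, inner_add_right, inner_smul_right, inner_smul_right, inner_neg_right,
        real_inner_self_eq_norm_sq]
      have h3 := mul_le_mul_of_nonneg_left h1 hα
      have h4 := mul_le_mul_of_nonneg_left h2 hβ
      have h5 : α * m + β * m = m := by rw [← add_mul, hαβ, one_mul]
      linarith
    have htd : ‖t • d‖ ≤ t * M := by
      rw [norm_smul, Real.norm_of_nonneg ht0.le]; gcongr
    have hb := hball (y := x + t • d) (by
      rw [dist_eq_norm, add_sub_cancel_left]; linarith)
    rw [add_sub_cancel_left, hbd x hx, sub_zero] at hb
    have hb1 := (le_abs_self _).trans hb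
    have hb2 : m / (2 * M) * ‖t • d‖ ≤ t * m / 2 := by
      calc m / (2 * M) * ‖t • d‖ ≤ m / (2 * M) * (t * M) := by gcongr
        _ = t * m / 2 := by field_simp
    have hb3 : innerSL ℝ G (t • d) ≤ -(t * m) := by
      rw [innerSL_apply_apply, inner_smul_right]
      have := mul_le_mul_of_nonneg_left hdm ht0.le
      linarith
    have : 0 < t * m := by positivity
    linarith
  -- The segment avoids `∂Ω`, hence lies in one of the disjoint open sets `Ω`, `(closure Ω)ᶜ`.
  have hsub : segment ℝ (x + t • (q - x)) (x + t • (-G)) ⊆ Ω := by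
    refine (convex_segment _ _).isPreconnected.subset_left_of_subset_union hΩo
      isClosed_closure.isOpen_compl
      (disjoint_compl_right.mono_left subset_closure |>.mono_right le_rfl) ?_
      ⟨_, left_mem_segment ℝ _ _, hray q hq t ht0 ht1⟩
    intro q' hq'
    by_contra hcon
    simp only [mem_union, mem_compl_iff, not_or, not_not] at hcon
    have : q' ∈ frontier Ω := by rw [hΩo.frontier_eq]; exact ⟨hcon.2, hcon.1⟩
    exact absurd (hbd q' this) (hneg' q' hq').ne
  exact hsub (right_mem_segment ℝ _ _)

lemma hasFDerivAt_ball_solution {E : Type*} [NormedAddCommGroup E] [InnerProductSpace ℝ E]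
    (c ρ : ℝ) (a x : E) :
    HasFDerivAt (fun q : E => c / 2 * (‖q - a‖ ^ 2 - ρ ^ 2)) (c • innerSL ℝ (x - a)) x := by
  have h := ((((hasFDerivAt_id x).sub_const a).norm_sq).sub_const (ρ ^ 2)).const_mul (c / 2)
  refine h.congr_fderiv ?_
  ext v
  simp
  ring

/-! ### The gradient estimate -/

/-- Boundary gradient estimate via inscribed and circumscribed balls touching at `x`:
`r ≤ |Du(x)| ≤ R`. -/
theorem boundary_gradient_estimate {n : ℕ}
    (Ω U : Set (EuclideanSpace ℝ (Fin n)))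
    (hΩo : IsOpen Ω) (hΩc : Convex ℝ Ω) (hΩb : Bornology.IsBounded Ω)
    (hUo : IsOpen U) (hUcl : closure Ω ⊆ U)
    (u : EuclideanSpace ℝ (Fin n) → ℝ)
    (hu1 : ContDiffOn ℝ 1 u U) (hu2 : ContDiffOn ℝ 2 u Ω)
    (hpos : ∀ x ∈ Ω, (hess u x).PosDef)
    (hMA : ∀ x ∈ Ω, (hess u x).det = 1)
    (hbd : ∀ x ∈ frontier Ω, u x = 0)
    (x : EuclideanSpace ℝ (Fin n)) (hx : x ∈ frontier Ω)
    (y z : EuclideanSpace ℝ (Fin n)) (r R : ℝ)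
    (hin : Metric.ball y r ⊆ Ω) (hxr : dist x y = r)
    (hout : Ω ⊆ Metric.ball z R) (hxR : dist x z = R) :
    r ≤ Real.sqrt (∑ i, (pd i u x) ^ 2) ∧ Real.sqrt (∑ i, (pd i u x) ^ 2) ≤ R := by
  have hn : 0 < n := by
    rcases Nat.eq_zero_or_pos n with rfl | h
    · rcases Set.eq_empty_or_nonempty Ω with h | h
      · simp [h] at hx
      · rw [Subsingleton.eq_univ_of_nonempty h] at hx; simp at hx
    · exact h
  have hxcl : x ∈ closure Ω := frontier_subset_closure hx
  have hux : u x = 0 := hbd x hx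
  have hucont : ContinuousOn u (closure Ω) := hu1.continuousOn.mono hUcl
  have hneg : ∀ q ∈ closure Ω, u q ≤ 0 := fun q hq => by
    have := le_of_forall_not_isLocalMin hΩo hΩb hucont.neg (m := 0)
      (fun q hq => by simp [hbd q hq]) (fun p hp hmin => by
        refine not_isLocalMax hn hΩo hu2 hpos hMA hp 0 (c := 0) zero_lt_one ?_
        simpa using hmin.neg) q hq
    simpa using this
  -- `G` is the gradient of `u` at `x`.
  set G : EuclideanSpace ℝ (Fin n) := gradient u x with hGdef
  have hG : HasFDerivAt u (innerSL ℝ G) x :=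
    ((hu1.contDiffAt (hUo.mem_nhds (hUcl hxcl))).differentiableAt
      (by norm_num)).hasGradientAt.hasFDerivAt
  have hnorm : Real.sqrt (∑ i, (pd i u x) ^ 2) = ‖G‖ := by
    rw [EuclideanSpace.norm_eq]
    congr 1
    refine Finset.sum_congr rfl fun i _ => ?_
    have : pd i u x = G i := by
      rw [pd, hG.fderiv]
      simp [EuclideanSpace.inner_single_right]
    rw [this, Real.norm_eq_abs, sq_abs]
  have hR0 : 0 ≤ R := hxR ▸ dist_nonneg
  have hr0 : 0 ≤ r := hxr ▸ dist_nonneg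
  rw [hnorm]
  constructor
  · rcases hr0.eq_or_lt with h0 | hrpos
    · rw [← h0]; exact norm_nonneg G
    -- On the inner ball `u` lies below `c · u_{B_r(y)}` for every `c ∈ [0, 1)`.
    have hcmp : ∀ c : ℝ, 0 ≤ c → c < 1 → ∀ q ∈ Metric.ball y r,
        u q ≤ c / 2 * (‖q - y‖ ^ 2 - r ^ 2) := by
      intro c hc0 hc q hq
      have hclb : closure (Metric.ball y r) ⊆ closure Ω := closure_mono hin
      have := le_of_forall_not_isLocalMin (S := Metric.ball y r) Metric.isOpen_ball
        Metric.isBounded_ball (f := fun q => -(u q - c / 2 * ‖q - y‖ ^ 2)) (m := c / 2 * r ^ 2)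
        (((hucont.mono hclb).sub (by fun_prop)).neg)
        (fun q hq => by
          have h1 := hneg q (hclb (frontier_subset_closure hq))
          rw [frontier_ball y hrpos.ne', mem_sphere_iff_norm] at hq
          simp only [hq]
          linarith)
        (fun p hp hmin => by
          refine not_isLocalMax hn hΩo hu2 hpos hMA (hin hp) y hc ?_
          simpa only [neg_neg] using hmin.neg) q (subset_closure hq)
      linarith
    -- Differentiate along the inward normal `y - x` at `x`.
    have hder : ∀ c : ℝ, 0 ≤ c → c < 1 → c * r ≤ ‖G‖ := by
      intro c hc0 hc
      have hfd := (hasFDerivAt_ball_solution c r y x).sub hG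
      have hxy : ‖x - y‖ = r := by rw [← dist_eq_norm, hxr]
      have h := fderiv_nonneg_of_ray (e := y - x) hfd (by simp [hux, hxy]) (by
        filter_upwards [Ioo_mem_nhdsGT (zero_lt_one (α := ℝ))] with t ht
        have hmem : x + t • (y - x) ∈ Metric.ball y r := by
          rw [mem_ball_iff_norm]
          have e : x + t • (y - x) - y = (1 - t) • (x - y) := by module
          rw [e, norm_smul, hxy, Real.norm_of_nonneg (by linarith [ht.2])]
          nlinarith [ht.1]
        have := hcmp c hc0 hc _ hmem
        simpa using this)
      have e : y - x = -(x - y) := by abel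
      simp only [sub_apply, smul_apply,
        innerSL_apply_apply, smul_eq_mul] at h
      rw [e, inner_neg_right, inner_neg_right, real_inner_self_eq_norm_sq, hxy] at h
      have hcs := real_inner_le_norm G (x - y)
      rw [hxy] at hcs
      nlinarith
    have hlim : Tendsto (fun c : ℝ => c * r) (𝓝[<] 1) (𝓝 (1 * r)) :=
      ((continuous_mul_const r).tendsto 1).mono_left nhdsWithin_le_nhds
    rw [one_mul] at hlim
    refine le_of_tendsto hlim ?_
    filter_upwards [Ioo_mem_nhdsLT (zero_lt_one (α := ℝ))] with c hc
      using hder c hc.1.le hc.2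
  · by_cases hG0 : G = 0
    · simpa [hG0] using hR0
    have hGpos : 0 < ‖G‖ := norm_pos_iff.mpr hG0
    -- On `Ω` the function `u` lies above `c · u_{B_R(z)}` for every `c > 1`.
    have hcmp : ∀ c : ℝ, 1 < c → ∀ q ∈ Ω, c / 2 * (‖q - z‖ ^ 2 - R ^ 2) ≤ u q := by
      intro c hc q hq
      have := le_of_forall_not_isLocalMin hΩo hΩb (f := fun q => u q - c / 2 * ‖q - z‖ ^ 2)
        (m := -(c / 2 * R ^ 2)) (hucont.sub (by fun_prop))
        (fun q hq => by
          have h1 : ‖q - z‖ ≤ R := by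
            have := (closure_mono hout).trans Metric.closure_ball_subset_closedBall
              (frontier_subset_closure hq)
            rwa [mem_closedBall_iff_norm] at this
          rw [hbd q hq]
          have : c / 2 * ‖q - z‖ ^ 2 ≤ c / 2 * R ^ 2 := by gcongr
          linarith)
        (fun p hp => not_isLocalMin hn hΩo hu2 hpos hMA hp z hc) q (subset_closure hq)
      linarith
    have hinw := neg_gradient_points_inward hΩo hΩc hbd
      (fun q hq => hneg q (subset_closure hq)) hx hG hG0
    have hxz : ‖x - z‖ = R := by rw [← dist_eq_norm, hxR]
    -- Differentiate along the inward direction `-G` at `x`.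
    have hder : ∀ c : ℝ, 1 < c → ‖G‖ ≤ c * R := by
      intro c hc
      have hfd := hG.sub (hasFDerivAt_ball_solution c R z x)
      have h := fderiv_nonneg_of_ray (e := -G) hfd (by simp [hux, hxz]) (by
        filter_upwards [hinw] with t ht
        have := hcmp c hc _ ht
        simpa using this)
      simp only [sub_apply, smul_apply,
        innerSL_apply_apply, smul_eq_mul] at h
      rw [inner_neg_right, inner_neg_right, real_inner_self_eq_norm_sq] at h
      have hcs := real_inner_le_norm (x - z) G
      rw [hxz] at hcs
      have h2 : c * inner ℝ (x - z) G ≤ c * (R * ‖G‖) := by gcongr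
      have h3 : ‖G‖ * ‖G‖ ≤ (c * R) * ‖G‖ := by nlinarith
      exact le_of_mul_le_mul_right h3 hGpos
    have hlim : Tendsto (fun c : ℝ => c * R) (𝓝[>] 1) (𝓝 (1 * R)) :=
      ((continuous_mul_const R).tendsto 1).mono_left nhdsWithin_le_nhds
    rw [one_mul] at hlim
    refine ge_of_tendsto hlim ?_
    filter_upwards [self_mem_nhdsWithin] with c hc using hder c hc
end

section
/- Let n = 2, let Ω ⊂ ℝ² be a bounded open convex domain, and let u be a function of class C³ on a neighborhood of the closure of Ω that is strictly convex (its Hessian D²u is positive definite) and satisfies det D²u = 1 in Ω together with u = 0 on ∂Ω. Let x₀ ∈ Ω be the unique critical point of u. Then for every x ∈ Ω, the quantity κ(x)|Du(x)|³ := Σ_{k,l=1}^2 u^{kl}(x) u_k(x) u_l(x) satisfies κ(x)|Du(x)|³ ≥ min{ inf_{y ∈ ∂Ω} Σ_{k,l} u^{kl}(y) u_k(y) u_l(y), −2u(x₀) } + 2u(x). -/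
/-!
The bound says that `P = κ|Du|³ - 2u` attains its minimum over the closure of `Ω` on `∂Ω` or at the
critical point `x₀`.

Identify `ℝ²` with `ℂ`, write `p = Du`, and use the coordinate `w = x + p`. It is injective on `Ω`
(`wMap_injOn`: the gradient of a convex function is monotone) and a local diffeomorphism
(`wMap_strict`). Because `det D²u = 1`, the function `F(w) = conj (x - p)` is holomorphic with
`|F'| < 1`. In these terms `κ|Du|³ = |g|² / (1 - |F'|²)` with `g = conj p + F' p`, and a direct
computation gives
`∂P/∂w = F'' (conj g / (1 - |F'|²))²` (`auxP_hasFDerivAt`).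

Only `F''`, a holomorphic function, and the continuous factor `conj g / (1 - |F'|²)`, nonzero away
from critical points, enter here. At a non-critical interior minimum either `F''` vanishes
identically and `P` is constant, or `F''` has a zero of finite order and `P` decreases along some
ray, a contradiction (`auxP_const`). Hence an interior minimum has the value `P(x₀) = -2u(x₀)`, and
a minimum on `∂Ω` has the value `κ|Du|³` there since `u = 0`. Holomorphy of `F` supplies the higher
regularity that a `C³` function `u` does not have a priori.
-/

open scoped BigOperators

/-- In dimension 2, `κ|Du|³ = Σ u^{kl} u_k u_l` at the point. -/
noncomputable def kappaCube (u : EuclideanSpace ℝ (Fin 2) → ℝ)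
    (x : EuclideanSpace ℝ (Fin 2)) : ℝ :=
  ∑ k, ∑ l, (hess u x)⁻¹ k l * pd k u x * pd l u x

/-! ### The minimum principle in the conformal coordinate -/

/-- The gradient `Du` as a function of the coordinate `w = x + Du`, where `F w = conj (x - Du)`. -/
noncomputable def gradW (F : ℂ → ℂ) (y : ℂ) : ℂ := (y - (starRingEnd ℂ) (F y)) / 2

/-- The function `g = conj p + F' p` with `p = gradW F`. It equals `4 ∂u/∂w`, and its squared modulus
divided by `1 - |F'|²` is `κ|Du|³`. -/
noncomputable def potW (F : ℂ → ℂ) (y : ℂ) : ℂ :=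
  (starRingEnd ℂ) (gradW F y) + deriv F y * gradW F y

/-- The function `κ|Du|³ - 2u` in the coordinate `w`, where `v` is `u` in that coordinate. -/
noncomputable def auxP (F : ℂ → ℂ) (v : ℂ → ℝ) (y : ℂ) : ℝ :=
  Complex.normSq (potW F y) / (1 - Complex.normSq (deriv F y)) - 2 * v y

theorem potW_re (F : ℂ → ℂ) (y : ℂ) : (potW F y).re = (y.re - (F y).re) / 2
    + ((deriv F y).re * ((y.re - (F y).re) / 2) - (deriv F y).im * ((y.im + (F y).im) / 2)) := by
  simp [potW, gradW, -map_div₀]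

theorem potW_im (F : ℂ → ℂ) (y : ℂ) : (potW F y).im = -((y.im + (F y).im) / 2)
    + ((deriv F y).re * ((y.im + (F y).im) / 2) + (deriv F y).im * ((y.re - (F y).re) / 2)) := by
  simp [potW, gradW, -map_div₀]

/-- The identity `∂P/∂w = F'' (conj g / (1 - |F'|²))²` for `P = auxP F v` and `g = potW F`. -/
theorem auxP_hasFDerivAt {V : Set ℂ} (hV : IsOpen V) {F : ℂ → ℂ} (hF : DifferentiableOn ℂ F V)
    {y : ℂ} (hy : y ∈ V) (hb : Complex.normSq (deriv F y) < 1) {v : ℂ → ℝ} {v' : ℂ →L[ℝ] ℝ}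
    (hv : HasFDerivAt v v' y) (hv' : ∀ e, v' e = (potW F y * e).re / 2) :
    ∃ L : ℂ →L[ℝ] ℝ, HasFDerivAt (auxP F v) L y ∧ ∀ e, L e =
      2 * (deriv (deriv F) y * ((starRingEnd ℂ) (potW F y)
        / ((1 - Complex.normSq (deriv F y) : ℝ) : ℂ)) ^ 2 * e).re := by
  have hm : 1 - ((deriv F y).re * (deriv F y).re + (deriv F y).im * (deriv F y).im) ≠ 0 := by
    rw [Complex.normSq_apply] at hb
    linarith
  have h1 : HasDerivAt F (deriv F y) y := (hF.differentiableAt (hV.mem_nhds hy)).hasDerivAt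
  have h2 : HasDerivAt (deriv F) (deriv (deriv F) y) y :=
    ((hF.deriv hV).differentiableAt (hV.mem_nhds hy)).hasDerivAt
  have h1' := h1.hasFDerivAt.restrictScalars ℝ
  have h2' := h2.hasFDerivAt.restrictScalars ℝ
  have fr := Complex.reCLM.hasFDerivAt.comp y h1'
  have fi := Complex.imCLM.hasFDerivAt.comp y h1'
  have br := Complex.reCLM.hasFDerivAt.comp y h2'
  have bi := Complex.imCLM.hasFDerivAt.comp y h2'
  have yr := Complex.reCLM.hasFDerivAt (x := y)
  have yi := Complex.imCLM.hasFDerivAt (x := y)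
  have pr := (yr.fun_sub fr).mul_const (1/2 : ℝ)
  have pi := (yi.fun_add fi).mul_const (1/2 : ℝ)
  have gr := (pr.fun_add (br.fun_mul pr)).fun_sub (bi.fun_mul pi)
  have gi := ((br.fun_mul pi).fun_add (bi.fun_mul pr)).fun_sub pi
  have m := ((br.fun_mul br).fun_add (bi.fun_mul bi)).const_sub 1
  have n := (gr.fun_mul gr).fun_add (gi.fun_mul gi)
  have mi := (hasDerivAt_inv (by simpa using hm)).comp_hasFDerivAt y m
  have d := (n.fun_mul mi).fun_sub (hv.const_mul 2)
  refine ⟨_, d.congr_of_eventuallyEq (Filter.Eventually.of_forall fun z => ?_), fun e => ?_⟩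
  · simp only [auxP, Complex.normSq_apply, potW_re, potW_im, Function.comp_apply,
      Complex.reCLM_apply, Complex.imCLM_apply]
    ring
  · have key : ∀ C g : ℂ, ∀ r : ℝ, (C * (g / (r : ℂ)) ^ 2 * e).re = (C * g ^ 2 * e).re / r ^ 2 := by
      intro C g r
      rw [← Complex.div_ofReal_re, Complex.ofReal_pow]
      congr 1
      ring
    have hgr := potW_re F y
    have hgi := potW_im F y
    rw [key]
    clear hv d mi n m gi gr pi pr yr yi br bi fr fi h1' h2' h1 h2 key
    generalize deriv (deriv F) y = C at *
    simp [hv', Complex.normSq_apply, pow_two]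
    rw [hgr, hgi]
    generalize deriv F y = B at *
    generalize F y = G at *
    have hm2 : 1 - (B.re ^ 2 + B.im ^ 2) ≠ 0 := by simpa only [pow_two] using hm
    generalize y.re - G.re = p₁ at *
    generalize y.im + G.im = p₂ at *
    field_simp
    ring

/-- Minimum principle for `P = auxP F v`: if `P` attains its minimum over `V` at a point where `g ≠ 0`,
then `P` is constant. If `F''` vanishes identically, so does `dP`. Otherwise `F''` has a zero of
finite order `n` at the point, so that `P` minus its value there behaves like
`Re (a (w - z) ^ (n + 1))` with `a ≠ 0` and is negative along some ray. -/
theorem auxP_const {V : Set ℂ} (hV : IsOpen V) (hVc : IsPreconnected V) {F : ℂ → ℂ}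
    (hF : DifferentiableOn ℂ F V)
    (hb : ∀ y ∈ V, Complex.normSq (deriv F y) < 1) {v : ℂ → ℝ}
    (hv : ∀ y ∈ V, ∃ v' : ℂ →L[ℝ] ℝ, HasFDerivAt v v' y ∧ ∀ e, v' e = (potW F y * e).re / 2)
    {z : ℂ} (hz : z ∈ V) (hp : potW F z ≠ 0) (hmin : ∀ y ∈ V, auxP F v z ≤ auxP F v y) :
    ∀ y ∈ V, auxP F v y = auxP F v z := by
  have hd : ∀ y ∈ V, ∃ L : ℂ →L[ℝ] ℝ, HasFDerivAt (auxP F v) L y ∧ ∀ e, L e =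
      2 * (deriv (deriv F) y * ((starRingEnd ℂ) (potW F y)
        / ((1 - Complex.normSq (deriv F y) : ℝ) : ℂ)) ^ 2 * e).re := by
    intro y hy
    obtain ⟨v', h1, h2⟩ := hv y hy
    exact auxP_hasFDerivAt hV hF hy (hb y hy) h1 h2
  have hFa : AnalyticOnNhd ℂ (deriv (deriv F)) V := ((hF.deriv hV).deriv hV).analyticOnNhd hV
  by_cases h0 : ∀ᶠ y in nhds z, deriv (deriv F) y = 0
  · have hz0 := hFa.eqOn_zero_of_preconnected_of_eventuallyEq_zero hVc hz h0
    intro y hy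
    refine hV.is_const_of_fderiv_eq_zero (𝕜 := ℝ) hVc (f := auxP F v) ?_ ?_ hy hz
    · intro y hy
      obtain ⟨L, h1, -⟩ := hd y hy
      exact h1.differentiableAt.differentiableWithinAt
    · intro y hy
      obtain ⟨L, h1, h2⟩ := hd y hy
      rw [h1.fderiv]
      ext e
      simp [h2, hz0 hy]
  · exfalso
    obtain ⟨n, c, hc, hc0, hev⟩ :=
      ((hFa z hz).exists_eventuallyEq_pow_smul_nonzero_iff).2 h0
    set q : ℂ → ℂ := fun y => (starRingEnd ℂ) (potW F y)
        / ((1 - Complex.normSq (deriv F y) : ℝ) : ℂ) with hq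
    have hq0 : q z ≠ 0 := by
      have := hb z hz
      refine div_ne_zero (by simpa using hp) ?_
      rw [Complex.ofReal_ne_zero]
      linarith
    have hqc : ContinuousAt q z := by
      have hFc : ContinuousAt F z := (hF.differentiableAt (hV.mem_nhds hz)).continuousAt
      have hF1 : ContinuousAt (deriv F) z :=
        ((hF.deriv hV).differentiableAt (hV.mem_nhds hz)).continuousAt
      have hg : ContinuousAt (gradW F) z := by
        unfold gradW
        exact (continuousAt_id.sub (Complex.continuous_conj.continuousAt.comp hFc)).div_const 2
      have hpc : ContinuousAt (potW F) z :=
        (Complex.continuous_conj.continuousAt.comp hg).add (hF1.mul hg)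
      refine (Complex.continuous_conj.continuousAt.comp hpc).div ?_ ?_
      · exact Complex.continuous_ofReal.continuousAt.comp
          (continuousAt_const.sub (Complex.continuous_normSq.continuousAt.comp hF1))
      · have := hb z hz
        rw [Complex.ofReal_ne_zero]
        linarith
    -- The direction `e` makes the leading coefficient of the derivative of `P` along the ray negative.
    obtain ⟨e, he⟩ := IsAlgClosed.exists_pow_nat_eq (-(c z * q z ^ 2)⁻¹) (Nat.succ_pos n)
    have hneg : ∀ᶠ y in nhds z, y ∈ V ∧ deriv (deriv F) y = (y - z) ^ n • c y ∧
        (c y * q y ^ 2 * e ^ (n + 1)).re < 0 := by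
      refine Filter.Eventually.and (hV.mem_nhds hz) (hev.and ?_)
      have hcont : ContinuousAt (fun y => (c y * q y ^ 2 * e ^ (n + 1)).re) z :=
        Complex.continuous_re.continuousAt.comp
          ((hc.continuousAt.mul (hqc.pow 2)).mul continuousAt_const)
      refine hcont.eventually (gt_mem_nhds ?_)
      have : c z * q z ^ 2 ≠ 0 := mul_ne_zero hc0 (pow_ne_zero 2 hq0)
      simp only [Nat.succ_eq_add_one] at he
      show (c z * q z ^ 2 * e ^ (n + 1)).re < 0
      rw [he, mul_neg, mul_inv_cancel₀ this]
      simp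
    have hline : Continuous fun t : ℝ => z + (t : ℂ) * e := by fun_prop
    have hev' : ∀ᶠ t : ℝ in nhds 0, (fun y => y ∈ V ∧ deriv (deriv F) y = (y - z) ^ n • c y ∧
        (c y * q y ^ 2 * e ^ (n + 1)).re < 0) (z + (t : ℂ) * e) := by
      have h0 := hline.tendsto 0
      simp only [Complex.ofReal_zero, zero_mul, add_zero] at h0
      exact h0.eventually hneg
    obtain ⟨δ, hδ, hball⟩ := Metric.eventually_nhds_iff.1 hev'
    have hder : ∀ t : ℝ, |t| < δ → HasDerivAt (fun t : ℝ => auxP F v (z + (t : ℂ) * e))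
        (2 * (t ^ n * (c (z + t * e) * q (z + t * e) ^ 2 * e ^ (n + 1)).re)) t := by
      intro t ht
      obtain ⟨h1, h2, h3⟩ := hball (y := t) (by simpa using ht)
      obtain ⟨L, hL, hL'⟩ := hd _ h1
      have hl : HasDerivAt (fun t : ℝ => z + (t : ℂ) * e) e t := by
        simpa using ((Complex.ofRealCLM.hasDerivAt (x := t)).mul_const e).const_add z
      have := hL.comp_hasDerivAt t hl
      refine this.congr_deriv ?_
      rw [hL', h2]
      congr 1
      rw [← Complex.re_ofReal_mul]
      congr 1
      simp only [hq, smul_eq_mul, Complex.ofReal_pow]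
      ring
    have hanti : StrictAntiOn (fun t : ℝ => auxP F v (z + (t : ℂ) * e)) (Set.Icc 0 (δ / 2)) := by
      refine strictAntiOn_of_deriv_neg (convex_Icc _ _) ?_ ?_
      · intro t ht
        refine (hder t ?_).continuousAt.continuousWithinAt
        rw [abs_of_nonneg ht.1]
        linarith [ht.2]
      · intro t ht
        rw [interior_Icc] at ht
        have ht' : |t| < δ := by
          rw [abs_of_pos ht.1]
          linarith [ht.2]
        rw [(hder t ht').deriv]
        have := (hball (y := t) (by simpa using ht')).2.2
        have := mul_neg_of_pos_of_neg (pow_pos ht.1 n) this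
        linarith
    have h1 := hanti (Set.left_mem_Icc.2 (by linarith)) (Set.right_mem_Icc.2 (by linarith))
      (by linarith : (0 : ℝ) < δ / 2)
    have h2 := hmin _ (hball (y := δ / 2) (by
      simp only [dist_zero_right, Real.norm_eq_abs]
      rw [abs_of_pos (by linarith)]
      linarith)).1
    simp only [Complex.ofReal_zero, zero_mul, add_zero] at h1
    linarith

/-! ### The conformal coordinate `w = x + Du` -/

/-- The Euclidean plane. -/
abbrev Plane : Type := EuclideanSpace ℝ (Fin 2)

/-- The conformal coordinate `w = x + Du(x)`, with `ℝ²` identified with `ℂ`. -/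
noncomputable def wMap (u : Plane → ℝ) (x : Plane) : ℂ := ⟨x 0 + pd 0 u x, x 1 + pd 1 u x⟩

/-- The function `conj (x - Du(x))`, which is holomorphic in `w = x + Du(x)` when `det D²u = 1`. -/
noncomputable def fMap (u : Plane → ℝ) (x : Plane) : ℂ := ⟨x 0 - pd 0 u x, -(x 1 - pd 1 u x)⟩

theorem ContDiffOn.pd_of_isOpen {U : Set Plane} (hU : IsOpen U) {f : Plane → ℝ} {m n : WithTop ℕ∞}
    (hf : ContDiffOn ℝ n f U) (hmn : m + 1 ≤ n) (i : Fin 2) : ContDiffOn ℝ m (pd i f) U :=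
  (hf.fderiv_of_isOpen hU hmn).clm_apply contDiffOn_const

theorem fderiv_eq_pd (f : Plane → ℝ) (x d : Plane) :
    fderiv ℝ f x d = pd 0 f x * d 0 + pd 1 f x * d 1 := by
  have hd : d = d 0 • EuclideanSpace.single 0 1 + d 1 • EuclideanSpace.single 1 1 := by
    ext i
    fin_cases i <;> simp
  conv_lhs => rw [hd]
  simp [pd, mul_comm]

theorem hess_entries {u : Plane → ℝ} {x : Plane} (hpos : (hess u x).PosDef) (hdet : (hess u x).det = 1) :
    hess u x 0 1 = hess u x 1 0 ∧ 0 < hess u x 0 0 ∧ 0 < hess u x 1 1 ∧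
      hess u x 0 0 * hess u x 1 1 - hess u x 1 0 ^ 2 = 1 := by
  have h1 : hess u x 0 1 = hess u x 1 0 := by
    simpa using (hpos.isHermitian.apply 0 1).symm
  refine ⟨h1, hpos.diag_pos, hpos.diag_pos, ?_⟩
  rw [Matrix.det_fin_two, h1] at hdet
  linarith

theorem quad_nonneg {r s t : ℝ} (hr : 0 < r) (h : r * t - s ^ 2 = 1) (a b : ℝ) :
    0 ≤ r * a ^ 2 + 2 * s * a * b + t * b ^ 2 := by
  have h1 : r * (r * a ^ 2 + 2 * s * a * b + t * b ^ 2) = (r * a + s * b) ^ 2 + b ^ 2 := by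
    linear_combination b ^ 2 * h
  exact nonneg_of_mul_nonneg_right (by rw [h1]; positivity) hr

/-- The derivative `1 + D²u` of `wMap u` is invertible. -/
theorem wMap_strict {U : Set Plane} (hU : IsOpen U) {u : Plane → ℝ} (hu : ContDiffOn ℝ 3 u U)
    {x : Plane} (hx : x ∈ U) (hpos : (hess u x).PosDef) (hdet : (hess u x).det = 1) :
    ∃ A : Plane ≃L[ℝ] ℂ, HasStrictFDerivAt (wMap u) (A : Plane →L[ℝ] ℂ) x ∧
      ∀ d, A d = ⟨d 0 + (hess u x 0 0 * d 0 + hess u x 1 0 * d 1),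
        d 1 + (hess u x 1 0 * d 0 + hess u x 1 1 * d 1)⟩ := by
  obtain ⟨hs, hr, ht, hd⟩ := hess_entries hpos hdet
  have hp : ∀ i, ContDiffAt ℝ 2 (pd i u) x := fun i =>
    (hu.pd_of_isOpen hU (by norm_num) i).contDiffAt (hU.mem_nhds hx)
  have hc : ∀ i, HasStrictFDerivAt (fun x : Plane => x i + pd i u x)
      (EuclideanSpace.proj i + fderiv ℝ (pd i u) x) x := fun i =>
    (EuclideanSpace.proj (𝕜 := ℝ) i).hasStrictFDerivAt.fun_add
      ((hp i).hasStrictFDerivAt (by norm_num))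
  have hw : HasStrictFDerivAt (wMap u) (Complex.equivRealProdCLM.symm.toContinuousLinearMap ∘L
      ((EuclideanSpace.proj 0 + fderiv ℝ (pd 0 u) x).prod
        (EuclideanSpace.proj 1 + fderiv ℝ (pd 1 u) x))) x :=
    Complex.equivRealProdCLM.symm.toContinuousLinearMap.hasStrictFDerivAt.comp x
      ((hc 0).prodMk (hc 1))
  set L := (Complex.equivRealProdCLM.symm.toContinuousLinearMap ∘L
      ((EuclideanSpace.proj 0 + fderiv ℝ (pd 0 u) x).prod
        (EuclideanSpace.proj 1 + fderiv ℝ (pd 1 u) x)) : Plane →L[ℝ] ℂ) with hL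
  have hLd : ∀ d, L d = ⟨d 0 + (hess u x 0 0 * d 0 + hess u x 1 0 * d 1),
        d 1 + (hess u x 1 0 * d 0 + hess u x 1 1 * d 1)⟩ := by
    intro d
    apply Complex.ext
    · simp [hL, fderiv_eq_pd, hess]
    · simp [hL, fderiv_eq_pd, ← hs]
      simp [hess]
  have hinj : Function.Injective L := by
    rw [injective_iff_map_eq_zero]
    intro d hd0
    rw [hLd, Complex.ext_iff] at hd0
    obtain ⟨h0, h1⟩ := hd0
    simp only [Complex.zero_re, Complex.zero_im] at h0 h1
    have hq := quad_nonneg hr hd (d 0) (d 1)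
    have hsum : (d 0) ^ 2 + (d 1) ^ 2 ≤ 0 := by
      linear_combination hq + d 0 * h0 + d 1 * h1
    have e0 : d 0 = 0 := by nlinarith [sq_nonneg (d 0), sq_nonneg (d 1)]
    have e1 : d 1 = 0 := by nlinarith [sq_nonneg (d 0), sq_nonneg (d 1)]
    ext i
    fin_cases i <;> simp [e0, e1]
  refine ⟨(LinearMap.linearEquivOfInjective (L : Plane →ₗ[ℝ] ℂ) hinj
    (by simp)).toContinuousLinearEquiv, ?_, fun d => hLd d⟩
  exact hw

/-- `x ↦ x + Du(x)` is injective because `Du` is monotone on a convex set. -/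
theorem wMap_injOn {Ω : Set Plane} (hΩo : IsOpen Ω) (hΩc : Convex ℝ Ω)
    {u : Plane → ℝ} (hu : ContDiffOn ℝ 3 u Ω)
    (hpos : ∀ x ∈ Ω, (hess u x).PosDef) (hMA : ∀ x ∈ Ω, (hess u x).det = 1) :
    Set.InjOn (wMap u) Ω := by
  intro x hx y hy hxy
  have hseg : ∀ t ∈ Set.Icc (0 : ℝ) 1, y + t • (x - y) ∈ Ω := fun t ht =>
    hΩc.add_smul_sub_mem hy hx ht
  set d := x - y with hd
  have hline : ∀ t : ℝ, HasDerivAt (fun t : ℝ => y + t • d) d t := fun t => by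
    simpa using ((hasDerivAt_id t).smul_const d).const_add y
  have hder : ∀ t ∈ Set.Icc (0 : ℝ) 1, HasDerivAt
      (fun t : ℝ => pd 0 u (y + t • d) * d 0 + pd 1 u (y + t • d) * d 1)
      (fderiv ℝ (pd 0 u) (y + t • d) d * d 0 + fderiv ℝ (pd 1 u) (y + t • d) d * d 1) t := by
    intro t ht
    have hp : ∀ i, HasDerivAt (fun t : ℝ => pd i u (y + t • d))
        (fderiv ℝ (pd i u) (y + t • d) d) t := by
      intro i
      have hi : HasFDerivAt (pd i u) (fderiv ℝ (pd i u) (y + t • d)) (y + t • d) :=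
        (((hu.pd_of_isOpen (m := 2) hΩo (by norm_num) i).contDiffAt
          (hΩo.mem_nhds (hseg t ht))).differentiableAt (by norm_num)).hasFDerivAt
      exact hi.comp_hasDerivAt t (hline t)
    exact ((hp 0).mul_const _).add ((hp 1).mul_const _)
  obtain ⟨c, hc, hc'⟩ := exists_hasDerivAt_eq_slope _ _ (zero_lt_one' ℝ)
    (fun t ht => (hder t ht).continuousAt.continuousWithinAt)
    (fun t ht => hder t (Set.Ioo_subset_Icc_self ht))
  have hcΩ := hseg c (Set.Ioo_subset_Icc_self hc)
  obtain ⟨hs, hr, ht, hdd⟩ := hess_entries (hpos _ hcΩ) (hMA _ hcΩ)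
  have hq := quad_nonneg hr hdd (d 0) (d 1)
  have hx1 : y + (1 : ℝ) • d = x := by simp [hd]
  have hy1 : y + (0 : ℝ) • d = y := by simp
  rw [hx1, hy1, fderiv_eq_pd, fderiv_eq_pd] at hc'
  change (hess u (y + c • d) 0 0 * d 0 + hess u (y + c • d) 1 0 * d 1) * d 0
    + (hess u (y + c • d) 0 1 * d 0 + hess u (y + c • d) 1 1 * d 1) * d 1 = _ at hc'
  rw [hs] at hc'
  have h0 : x 0 + pd 0 u x = y 0 + pd 0 u y := congrArg Complex.re hxy
  have h1 : x 1 + pd 1 u x = y 1 + pd 1 u y := congrArg Complex.im hxy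
  have d0 : d 0 = x 0 - y 0 := rfl
  have d1 : d 1 = x 1 - y 1 := rfl
  have hsum : (d 0) ^ 2 + (d 1) ^ 2 ≤ 0 := by
    have e0 : pd 0 u x - pd 0 u y = - d 0 := by linarith
    have e1 : pd 1 u x - pd 1 u y = - d 1 := by linarith
    have : (pd 0 u x - pd 0 u y) * d 0 + (pd 1 u x - pd 1 u y) * d 1 ≥ 0 := by
      linear_combination hq + hc'
    rw [e0, e1] at this
    linarith
  have e0 : d 0 = 0 := by nlinarith [sq_nonneg (d 0), sq_nonneg (d 1)]
  have e1 : d 1 = 0 := by nlinarith [sq_nonneg (d 0), sq_nonneg (d 1)]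
  have : d = 0 := by
    ext i
    fin_cases i <;> simp [e0, e1]
  exact sub_eq_zero.1 this

/-- Where `det D²u = 1` the inverse Hessian is the adjugate, so `κ|Du|³` is a polynomial in the
derivatives of `u`. -/
theorem kappaCube_eq {u : Plane → ℝ} {x : Plane} (hdet : (hess u x).det = 1) :
    kappaCube u x = hess u x 1 1 * pd 0 u x * pd 0 u x - hess u x 0 1 * pd 0 u x * pd 1 u x
      - hess u x 1 0 * pd 1 u x * pd 0 u x + hess u x 0 0 * pd 1 u x * pd 1 u x := by
  simp [kappaCube, Matrix.inv_def, hdet, Matrix.adjugate_fin_two, Fin.sum_univ_two]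
  ring

theorem fMap_hasFDerivAt {U : Set Plane} (hU : IsOpen U) {u : Plane → ℝ} (hu : ContDiffOn ℝ 3 u U)
    {x : Plane} (hx : x ∈ U) (hs : hess u x 0 1 = hess u x 1 0) :
    ∃ M : Plane →L[ℝ] ℂ, HasFDerivAt (fMap u) M x ∧
      ∀ d, M d = ⟨d 0 - (hess u x 0 0 * d 0 + hess u x 1 0 * d 1),
        -(d 1 - (hess u x 1 0 * d 0 + hess u x 1 1 * d 1))⟩ := by
  have hp : ∀ i, HasFDerivAt (pd i u) (fderiv ℝ (pd i u) x) x := fun i =>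
    (((hu.pd_of_isOpen (m := 2) hU (by norm_num) i).contDiffAt
      (hU.mem_nhds hx)).differentiableAt (by norm_num)).hasFDerivAt
  have hc : ∀ i, HasFDerivAt (fun x : Plane => x i - pd i u x)
      (EuclideanSpace.proj i - fderiv ℝ (pd i u) x) x := fun i =>
    (EuclideanSpace.proj (𝕜 := ℝ) i).hasFDerivAt.fun_sub (hp i)
  have hw : HasFDerivAt (fMap u) (Complex.equivRealProdCLM.symm.toContinuousLinearMap ∘L
      ((EuclideanSpace.proj 0 - fderiv ℝ (pd 0 u) x).prod
        (-(EuclideanSpace.proj 1 - fderiv ℝ (pd 1 u) x)))) x :=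
    Complex.equivRealProdCLM.symm.toContinuousLinearMap.hasFDerivAt.comp x
      ((hc 0).prodMk (hc 1).fun_neg)
  refine ⟨_, hw, fun d => ?_⟩
  apply Complex.ext
  · simp [fderiv_eq_pd, hess]
  · simp [fderiv_eq_pd, ← hs]
    simp [hess]

/-- If `κ|Du|³ - 2u` attains its minimum over `Ω` at a non-critical point, it is constant. The
statement is transported from `auxP_const` through the coordinate `w = wMap u`. -/
theorem kappaCube_min_interior {Ω : Set Plane} (hΩo : IsOpen Ω) (hΩc : Convex ℝ Ω)
    {u : Plane → ℝ} (hu : ContDiffOn ℝ 3 u Ω)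
    (hpos : ∀ x ∈ Ω, (hess u x).PosDef) (hMA : ∀ x ∈ Ω, (hess u x).det = 1)
    {z : Plane} (hz : z ∈ Ω) (hgrad : fderiv ℝ u z ≠ 0)
    (hmin : ∀ x ∈ Ω, kappaCube u z - 2 * u z ≤ kappaCube u x - 2 * u x) :
    ∀ x ∈ Ω, kappaCube u x - 2 * u x = kappaCube u z - 2 * u z := by
  have hinj := wMap_injOn hΩo hΩc hu hpos hMA
  set X : ℂ → Plane := Function.invFunOn (wMap u) Ω with hX
  have hXw : ∀ x ∈ Ω, X (wMap u x) = x := fun x hx => hinj.leftInvOn_invFunOn hx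
  set F : ℂ → ℂ := fun y => fMap u (X y) with hF
  set V : Set ℂ := wMap u '' Ω with hV
  have hVo : IsOpen V := by
    rw [isOpen_iff_mem_nhds]
    rintro _ ⟨x, hx, rfl⟩
    obtain ⟨A, hA, -⟩ := wMap_strict hΩo hu hx (hpos x hx) (hMA x hx)
    rw [← hA.map_nhds_eq_of_equiv]
    exact Filter.image_mem_map (hΩo.mem_nhds hx)
  have hVc : IsPreconnected V := by
    refine hΩc.isPreconnected.image _ fun x hx => ?_
    obtain ⟨A, hA, -⟩ := wMap_strict hΩo hu hx (hpos x hx) (hMA x hx)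
    exact hA.continuousAt.continuousWithinAt
  have hXd : ∀ x ∈ Ω, ∀ A : Plane ≃L[ℝ] ℂ, HasStrictFDerivAt (wMap u) (A : Plane →L[ℝ] ℂ) x →
      HasFDerivAt X (A.symm : ℂ →L[ℝ] Plane) (wMap u x) := by
    intro x hx A hA
    refine (hA.to_local_left_inverse (g := X) ?_).hasFDerivAt
    filter_upwards [hΩo.mem_nhds hx] with y hy using hXw y hy
  -- With `H = D²u`, the real derivative of `F` is `conj ∘ (1 - H)(1 + H)⁻¹`. Since `det H = 1`, the
  -- matrix `(1 - H)(1 + H)⁻¹` is symmetric and trace-free, so `F` is holomorphic; its complex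
  -- derivative is read off the first column.
  have hFd : ∀ x ∈ Ω, HasDerivAt F
      ⟨(hess u x 1 1 - hess u x 0 0) / (2 + hess u x 0 0 + hess u x 1 1),
        2 * hess u x 1 0 / (2 + hess u x 0 0 + hess u x 1 1)⟩ (wMap u x) := by
    intro x hx
    obtain ⟨hs, hr, ht, hdd⟩ := hess_entries (hpos x hx) (hMA x hx)
    obtain ⟨A, hA, hAd⟩ := wMap_strict hΩo hu hx (hpos x hx) (hMA x hx)
    obtain ⟨M, hM, hMd⟩ := fMap_hasFDerivAt hΩo hu hx hs
    have hM' : HasFDerivAt (fMap u) M (X (wMap u x)) := by rwa [hXw x hx]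
    have hcomp := hM'.comp (wMap u x) (hXd x hx A hA)
    rw [hasDerivAt_iff_hasFDerivAt]
    refine hasFDerivAt_of_restrictScalars ℝ hcomp ?_
    apply ContinuousLinearMap.ext
    intro e
    obtain ⟨d, rfl⟩ := A.surjective e
    have hD : 2 + hess u x 0 0 + hess u x 1 1 ≠ 0 := by linarith
    simp only [ContinuousLinearMap.coe_restrictScalars', ContinuousLinearMap.toSpanSingleton_apply,
      ContinuousLinearMap.comp_apply, ContinuousLinearEquiv.coe_coe,
      ContinuousLinearEquiv.symm_apply_apply, smul_eq_mul]
    simp only [hMd, hAd]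
    generalize hess u x 0 0 = r at *
    generalize hess u x 1 0 = s at *
    generalize hess u x 1 1 = t at *
    apply Complex.ext
    · simp only [Complex.mul_re]
      field_simp
      linear_combination (2 * d 0) * hdd
    · simp only [Complex.mul_im]
      field_simp
      linear_combination (- 2 * d 1) * hdd
  have hnorm : ∀ x ∈ Ω, 1 - Complex.normSq (deriv F (wMap u x))
      = 4 / (2 + hess u x 0 0 + hess u x 1 1) := by
    intro x hx
    obtain ⟨hs, hr, ht, hdd⟩ := hess_entries (hpos x hx) (hMA x hx)
    have hD : 2 + hess u x 0 0 + hess u x 1 1 ≠ 0 := by linarith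
    rw [(hFd x hx).deriv, Complex.normSq_apply]
    field_simp
    linear_combination 4 * hdd
  have hpr : ∀ x ∈ Ω, (potW F (wMap u x)).re = pd 0 u x
      + ((hess u x 1 1 - hess u x 0 0) / (2 + hess u x 0 0 + hess u x 1 1) * pd 0 u x
        - 2 * hess u x 1 0 / (2 + hess u x 0 0 + hess u x 1 1) * pd 1 u x) := by
    intro x hx
    rw [potW_re, (hFd x hx).deriv]
    simp only [hF, hXw x hx]
    simp only [wMap, fMap]
    ring
  have hpi : ∀ x ∈ Ω, (potW F (wMap u x)).im = - pd 1 u x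
      + ((hess u x 1 1 - hess u x 0 0) / (2 + hess u x 0 0 + hess u x 1 1) * pd 1 u x
        + 2 * hess u x 1 0 / (2 + hess u x 0 0 + hess u x 1 1) * pd 0 u x) := by
    intro x hx
    rw [potW_im, (hFd x hx).deriv]
    simp only [hF, hXw x hx]
    simp only [wMap, fMap]
    ring
  have hP : ∀ x ∈ Ω, auxP F (fun y => u (X y)) (wMap u x) = kappaCube u x - 2 * u x := by
    intro x hx
    obtain ⟨hs, hr, ht, hdd⟩ := hess_entries (hpos x hx) (hMA x hx)
    have hD : 2 + hess u x 0 0 + hess u x 1 1 ≠ 0 := by linarith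
    rw [auxP, hnorm x hx, Complex.normSq_apply, hpr x hx, hpi x hx, kappaCube_eq (hMA x hx), hs,
      hXw x hx]
    congr 1
    generalize hess u x 0 0 = r at *
    generalize hess u x 1 0 = s at *
    generalize hess u x 1 1 = t at *
    generalize pd 0 u x = p at *
    generalize pd 1 u x = q at *
    field_simp
    linear_combination (-4 * (p ^ 2 + q ^ 2)) * hdd
  have hv : ∀ y ∈ V, ∃ v' : ℂ →L[ℝ] ℝ, HasFDerivAt (fun y => u (X y)) v' y ∧
      ∀ e, v' e = (potW F y * e).re / 2 := by
    rintro _ ⟨x, hx, rfl⟩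
    obtain ⟨hs, hr, ht, hdd⟩ := hess_entries (hpos x hx) (hMA x hx)
    obtain ⟨A, hA, hAd⟩ := wMap_strict hΩo hu hx (hpos x hx) (hMA x hx)
    have hu' : HasFDerivAt u (fderiv ℝ u x) (X (wMap u x)) := by
      rw [hXw x hx]
      exact ((hu.contDiffAt (hΩo.mem_nhds hx)).differentiableAt (by norm_num)).hasFDerivAt
    refine ⟨_, hu'.comp (wMap u x) (hXd x hx A hA), fun e => ?_⟩
    obtain ⟨d, rfl⟩ := A.surjective e
    have hD : 2 + hess u x 0 0 + hess u x 1 1 ≠ 0 := by linarith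
    rw [Complex.mul_re, hpr x hx, hpi x hx]
    simp only [ContinuousLinearMap.comp_apply, ContinuousLinearEquiv.coe_coe,
      ContinuousLinearEquiv.symm_apply_apply]
    simp only [fderiv_eq_pd, hAd]
    generalize hess u x 0 0 = r at *
    generalize hess u x 1 0 = s at *
    generalize hess u x 1 1 = t at *
    generalize pd 0 u x = p at *
    generalize pd 1 u x = q at *
    field_simp
    linear_combination (-2 * (p * d 0 + q * d 1)) * hdd
  have hpot : potW F (wMap u z) ≠ 0 := by
    intro h0
    apply hgrad
    obtain ⟨hs, hr, ht, hdd⟩ := hess_entries (hpos z hz) (hMA z hz)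
    have hD : 2 + hess u z 0 0 + hess u z 1 1 ≠ 0 := by linarith
    have e1 := hpr z hz
    have e2 := hpi z hz
    simp only [h0, Complex.zero_re, Complex.zero_im] at e1 e2
    have hpq : pd 0 u z = 0 ∧ pd 1 u z = 0 := by
      generalize hess u z 0 0 = r at *
      generalize hess u z 1 0 = s at *
      generalize hess u z 1 1 = t at *
      generalize pd 0 u z = p at *
      generalize pd 1 u z = q at *
      field_simp at e1 e2
      have h1 : p * (1 + t) = s * q := by linarith
      have h2 : q * (1 + r) = s * p := by linarith
      constructor
      · have : p * (2 + r + t) = 0 := by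
          linear_combination (1 + r) * h1 + s * h2 - p * hdd
        exact (mul_eq_zero.1 this).resolve_right hD
      · have : q * (2 + r + t) = 0 := by
          linear_combination (1 + t) * h2 + s * h1 - q * hdd
        exact (mul_eq_zero.1 this).resolve_right hD
    ext d
    rw [fderiv_eq_pd, hpq.1, hpq.2]
    simp
  intro x hx
  rw [← hP x hx, ← hP z hz]
  refine auxP_const hVo hVc ?_ ?_ hv ⟨z, hz, rfl⟩ hpot ?_ _ ⟨x, hx, rfl⟩
  · rintro _ ⟨x, hx, rfl⟩
    exact (hFd x hx).differentiableAt.differentiableWithinAt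
  · rintro _ ⟨x, hx, rfl⟩
    obtain ⟨hs, hr, ht, hdd⟩ := hess_entries (hpos x hx) (hMA x hx)
    have h1 := hnorm x hx
    have h2 : 0 < 4 / (2 + hess u x 0 0 + hess u x 1 1) := by positivity
    linarith
  · rintro _ ⟨x, hx, rfl⟩
    rw [hP x hx, hP z hz]
    exact hmin x hx

/-- Lower bound for the curvature of level lines in dimension 2:
`κ(x)|Du(x)|³ ≥ min{ inf_{∂Ω} κ|Du|³, −2u(x₀) } + 2u(x)`. -/
theorem curvature_lower_bound_dim2
    (Ω U : Set (EuclideanSpace ℝ (Fin 2)))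
    (hΩo : IsOpen Ω) (hΩc : Convex ℝ Ω) (hΩb : Bornology.IsBounded Ω)
    (hUo : IsOpen U) (hUcl : closure Ω ⊆ U)
    (u : EuclideanSpace ℝ (Fin 2) → ℝ)
    (hu : ContDiffOn ℝ 3 u U)
    (hpos : ∀ x ∈ Ω, (hess u x).PosDef)
    (hMA : ∀ x ∈ Ω, (hess u x).det = 1)
    (hbd : ∀ x ∈ frontier Ω, u x = 0)
    (x₀ : EuclideanSpace ℝ (Fin 2)) (hx₀ : x₀ ∈ Ω)
    (hcrit : fderiv ℝ u x₀ = 0)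
    (huniq : ∀ x ∈ Ω, fderiv ℝ u x = 0 → x = x₀) :
    ∀ x ∈ Ω,
      min (sInf (kappaCube u '' frontier Ω)) (-2 * u x₀) + 2 * u x ≤
        kappaCube u x := by
  have hpdc : ∀ i, ContDiffOn ℝ 2 (pd i u) U := fun i => hu.pd_of_isOpen hUo (by norm_num) i
  have hp : ∀ i, ContinuousOn (pd i u) (closure Ω) := fun i => (hpdc i).continuousOn.mono hUcl
  have hh : ∀ i j, ContinuousOn (fun x => hess u x i j) (closure Ω) := fun i j =>
    ((hpdc j).pd_of_isOpen (m := 1) hUo (by norm_num) i).continuousOn.mono hUcl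
  have hdetc : ContinuousOn (fun x => (hess u x).det) (closure Ω) := by
    simp only [Matrix.det_fin_two]
    exact ((hh 0 0).mul (hh 1 1)).sub ((hh 0 1).mul (hh 1 0))
  have hdet : ∀ x ∈ closure Ω, (hess u x).det = 1 :=
    Set.EqOn.of_subset_closure (g := fun _ => (1 : ℝ)) hMA hdetc continuousOn_const
      subset_closure subset_rfl
  have hκ : ContinuousOn (kappaCube u) (closure Ω) := by
    refine ContinuousOn.congr ?_ fun x hx => kappaCube_eq (hdet x hx)
    exact (((((hh 1 1).mul (hp 0)).mul (hp 0)).sub (((hh 0 1).mul (hp 0)).mul (hp 1))).sub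
      (((hh 1 0).mul (hp 1)).mul (hp 0))).add (((hh 0 0).mul (hp 1)).mul (hp 1))
  have hcpt : IsCompact (closure Ω) := hΩb.isCompact_closure
  have huc : ContinuousOn u (closure Ω) := hu.continuousOn.mono hUcl
  obtain ⟨z, hz, hzmin⟩ := hcpt.exists_isMinOn ⟨x₀, subset_closure hx₀⟩
    (hκ.sub (huc.const_smul (2 : ℝ)))
  have hzmin' : ∀ x ∈ closure Ω, kappaCube u z - 2 * u z ≤ kappaCube u x - 2 * u x :=
    fun x hx => by simpa using hzmin hx
  have hκ₀ : kappaCube u x₀ = 0 := by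
    simp [kappaCube, pd, hcrit]
  -- The minimum point `z` of `κ|Du|³ - 2u` over the closure lies in `Ω` or on its boundary.
  intro x hx
  have hxz := hzmin' x (subset_closure hx)
  by_cases hzΩ : z ∈ Ω
  · have hval : kappaCube u z - 2 * u z = -2 * u x₀ := by
      by_cases hg : fderiv ℝ u z = 0
      · rw [huniq z hzΩ hg, hκ₀]
        ring
      · have := kappaCube_min_interior hΩo hΩc (hu.mono (subset_closure.trans hUcl)) hpos hMA
          hzΩ hg (fun y hy => hzmin' y (subset_closure hy)) x₀ hx₀
        rw [← this, hκ₀]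
        ring
    have := min_le_right (sInf (kappaCube u '' frontier Ω)) (-2 * u x₀)
    linarith
  · have hzf : z ∈ frontier Ω := by
      rw [hΩo.frontier_eq]
      exact ⟨hz, hzΩ⟩
    have hbdd : BddBelow (kappaCube u '' frontier Ω) :=
      ((hcpt.image_of_continuousOn hκ).bddBelow).mono (Set.image_mono frontier_subset_closure)
    have h1 := csInf_le hbdd (Set.mem_image_of_mem (kappaCube u) hzf)
    have h2 := min_le_left (sInf (kappaCube u '' frontier Ω)) (-2 * u x₀)
    have h3 := hbd z hzf
    linarith
end
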